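/- In the U-statistic setting, if max_{α∈Λ_{n,ℓ}} ‖f(X_α) − c_α‖_∞ =: L ∈ (0,∞) and Var[U_n] > 0, then d_K( (U_n − E[U_n])/√(Var[U_n]) , N(0,1) ) ≤ 227.5 · √(ℓ²(m+1)/n) · Ξ_∞^{−3}, where Ξ_∞ := (1/L)·√( Var[V_n] / (ℓ²(m+1)·n^{2ℓ−1}) ) ∈ (0,1]. -/

import Mathlib

open MeasureTheory ProbabilityTheory Filter

noncomputable section

/-- `G` is a dependency graph of the family `Y`: whenever `V₁, V₂` are disjoint sets of
vertices with no edge of `G` between them, the families `(Y k)_{k ∈ V₁}` and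
`(Y k)_{k ∈ V₂}` are independent. -/
def IsDependencyGraph {Ω V E : Type*} [MeasurableSpace Ω] [MeasurableSpace E]
    (μ : Measure Ω) (G : SimpleGraph V) (Y : V → Ω → E) : Prop :=
  ∀ V₁ V₂ : Set V, Disjoint V₁ V₂ →
    (∀ i ∈ V₁, ∀ j ∈ V₂, ¬ G.Adj i j) →
    IndepFun (fun ω (i : V₁) => Y i.1 ω) (fun ω (j : V₂) => Y j.1 ω) μ

/-- Kolmogorov distance between the law of `W` under `μ` and the standard normal law. -/
def dKolNormal {Ω : Type*} [MeasurableSpace Ω] (μ : Measure Ω) (W : Ω → ℝ) : ℝ :=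
  ⨆ t : ℝ, |(μ {ω | W ω ≤ t}).toReal - (gaussianReal 0 1 (Set.Iic t)).toReal|

/-!
Stein's method under local dependence. Write `W = ∑ ξᵢ` for the standardised sum and `ηᵢ` for the
sum of `ξ` over the closed neighbourhood of `i`. Since `ξᵢ` is independent of `W - ηᵢ`, the
quantity `E[f' W - W f W]` reduces to the fluctuation of `∑ ξᵢ ηᵢ` about its mean `1`, which
a variance bound controls, and to a second-order Taylor remainder of `f` over steps of size
`|ηᵢ| ≤ D b`. For a test function ramping from `1` to `0` over a short interval, that remainder is
governed by the probability that `W` lies near the ramp, which in turn is bounded by the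
Kolmogorov distance `κ` itself. With a suitable ramp width this gives `κ ≤ κ / 2 + 12 θ`, hence
`κ ≤ 24 θ`, where `θ = |V| D² b³`.

A dependency graph of the variables induces one on the tuples: join two tuples as soon as some of
their entries are equal or adjacent. Its closed neighbourhoods have at most
`ℓ² (m + 1) n ^ (ℓ - 1)` elements, and the Kolmogorov distance does not see the normalisation
that turns `V_n` into `U_n`.
-/

/-- The standard normal law. -/
local notation "γ" => gaussianReal 0 1

/-- The standard normal density. -/
local notation "φ" => gaussianPDFReal 0 1

section Gaussian

lemma gaussianPDFReal_zero_one (x : ℝ) : φ x = (√(2 * Real.pi))⁻¹ * Real.exp (-x ^ 2 / 2) := by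
  simp [gaussianPDFReal]

lemma gaussianPDFReal_zero_one_pos (x : ℝ) : 0 < φ x :=
  gaussianPDFReal_pos 0 1 x one_ne_zero

lemma hasDerivAt_gaussianPDFReal_zero_one (x : ℝ) : HasDerivAt φ (-(x * φ x)) x := by
  rw [funext gaussianPDFReal_zero_one]
  refine (((hasDerivAt_id x).pow 2).neg.div_const 2).exp.const_mul _ |>.congr_deriv ?_
  simp only [id, Nat.cast_ofNat, Pi.neg_apply, Pi.pow_apply]
  ring

lemma continuous_gaussianPDFReal_zero_one : Continuous φ :=
  continuous_iff_continuousAt.2 fun x => (hasDerivAt_gaussianPDFReal_zero_one x).continuousAt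

lemma gaussianPDFReal_zero_one_abs (x : ℝ) : φ |x| = φ x := by
  simp only [gaussianPDFReal_zero_one, sq_abs]

lemma tendsto_gaussianPDFReal_zero_one_atTop : Tendsto φ atTop (nhds 0) := by
  rw [funext gaussianPDFReal_zero_one, ← mul_zero (√(2 * Real.pi))⁻¹]
  refine (Real.tendsto_exp_atBot.comp ?_).const_mul _
  exact (tendsto_neg_atTop_atBot.comp (tendsto_pow_atTop two_ne_zero)).atBot_div_const two_pos

lemma integrable_mul_gaussianPDFReal_zero_one : Integrable fun x => x * φ x := by
  simp only [gaussianPDFReal_zero_one]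
  refine ((integrable_mul_exp_neg_mul_sq (b := 1 / 2) (by norm_num)).const_mul
    (√(2 * Real.pi))⁻¹).congr (Eventually.of_forall fun x => ?_)
  ring_nf

lemma gaussianPDFReal_zero_one_le (x : ℝ) : φ x ≤ 1 / 2 := by
  have hsqrt : 2 ≤ √(2 * Real.pi) := Real.le_sqrt_of_sq_le (by linarith [Real.pi_gt_three])
  have hexp : Real.exp (-x ^ 2 / 2) ≤ 1 := Real.exp_le_one_iff.2 (by nlinarith [sq_nonneg x])
  calc φ x = (√(2 * Real.pi))⁻¹ * Real.exp (-x ^ 2 / 2) := gaussianPDFReal_zero_one x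
    _ ≤ 2⁻¹ * 1 := by gcongr
    _ = 1 / 2 := by norm_num

lemma setIntegral_gaussianReal {s : Set ℝ} (hs : MeasurableSet s) (g : ℝ → ℝ) :
    ∫ x in s, g x ∂γ = ∫ x in s, φ x * g x := by
  rw [← integral_indicator hs, integral_gaussianReal_eq_integral_smul one_ne_zero,
    ← integral_indicator hs]
  simp only [smul_eq_mul, Set.indicator_mul_right]

lemma measureReal_gaussianReal {s : Set ℝ} (hs : MeasurableSet s) :
    (γ).real s = ∫ x in s, φ x := by
  rw [← setIntegral_one_eq_measureReal, setIntegral_gaussianReal hs]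
  simp only [mul_one]

lemma measureReal_gaussianReal_Ioc_le {a b : ℝ} (hab : a ≤ b) :
    (γ).real (Set.Ioc a b) ≤ (b - a) / 2 := by
  rw [measureReal_gaussianReal measurableSet_Ioc]
  calc ∫ x in Set.Ioc a b, φ x ≤ ∫ _ in Set.Ioc a b, (1 / 2 : ℝ) :=
        setIntegral_mono (integrable_gaussianPDFReal 0 1).integrableOn
          (integrableOn_const measure_Ioc_lt_top.ne) gaussianPDFReal_zero_one_le
    _ = (b - a) / 2 := by simp [hab]; ring

lemma measureReal_gaussianReal_Iic_sub_le {a b : ℝ} (hab : a ≤ b) :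
    (γ).real (Set.Iic b) - (γ).real (Set.Iic a) ≤ (b - a) / 2 := by
  rw [← measureReal_sdiff (Set.Iic_subset_Iic.2 hab) measurableSet_Iic, Set.Iic_sdiff_Iic]
  exact measureReal_gaussianReal_Ioc_le hab

lemma measureReal_gaussianReal_Iic_neg (w : ℝ) :
    (γ).real (Set.Iic (-w)) = (γ).real (Set.Ioi w) := by
  have hneg : (γ).map (fun x => -x) = γ := by rw [gaussianReal_map_neg, neg_zero]
  have := nullSingletonClass_gaussianReal (μ := 0) (v := 1) one_ne_zero
  rw [← hneg, map_measureReal_apply measurable_neg measurableSet_Iic, hneg,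
    measureReal_congr Ioi_ae_eq_Ici]
  congr 1
  ext x
  simp

lemma measureReal_gaussianReal_Ioi_le {w : ℝ} (hw : 0 ≤ w) :
    (γ).real (Set.Ioi w) ≤ √(2 * Real.pi) * φ w := by
  have hshift : Integrable fun x => √(2 * Real.pi) * φ w * φ (x - w) :=
    ((integrable_gaussianPDFReal 0 1).comp_sub_right w).const_mul _
  have hle : ∀ x ∈ Set.Ioi w, φ x ≤ √(2 * Real.pi) * φ w * φ (x - w) := by
    intro x (hx : w < x)
    have hsqrt : √(2 * Real.pi) ≠ 0 := by positivity
    simp only [gaussianPDFReal_zero_one]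
    rw [mul_inv_cancel_left₀ hsqrt, mul_left_comm, ← Real.exp_add]
    gcongr
    nlinarith
  calc (γ).real (Set.Ioi w) = ∫ x in Set.Ioi w, φ x := measureReal_gaussianReal measurableSet_Ioi
    _ ≤ ∫ x in Set.Ioi w, √(2 * Real.pi) * φ w * φ (x - w) :=
        setIntegral_mono_on (integrable_gaussianPDFReal 0 1).integrableOn hshift.integrableOn
          measurableSet_Ioi hle
    _ ≤ ∫ x, √(2 * Real.pi) * φ w * φ (x - w) :=
        setIntegral_le_integral hshift <| Eventually.of_forall fun x => by
          have := gaussianPDFReal_nonneg 0 1 w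
          have := gaussianPDFReal_nonneg 0 1 (x - w)
          positivity
    _ = √(2 * Real.pi) * φ w := by
        rw [integral_const_mul, integral_sub_right_eq_self φ,
          integral_gaussianPDFReal_eq_one 0 one_ne_zero, mul_one]

lemma mul_measureReal_gaussianReal_Ioi_le (w : ℝ) : w * (γ).real (Set.Ioi w) ≤ φ w := by
  have hint := integrable_mul_gaussianPDFReal_zero_one
  have hFTC : ∫ x in Set.Ioi w, x * φ x = φ w := by
    have h := integral_Ioi_of_hasDerivAt_of_tendsto' (a := w) (f := fun x => -φ x)
      (fun x _ => (hasDerivAt_gaussianPDFReal_zero_one x).neg)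
      (by simpa only [neg_neg] using hint.integrableOn)
      tendsto_gaussianPDFReal_zero_one_atTop.neg
    simpa only [neg_neg, neg_zero, zero_sub] using h
  calc w * (γ).real (Set.Ioi w) = ∫ x in Set.Ioi w, w * φ x := by
        rw [measureReal_gaussianReal measurableSet_Ioi, integral_const_mul]
    _ ≤ ∫ x in Set.Ioi w, x * φ x :=
        setIntegral_mono_on ((integrable_gaussianPDFReal 0 1).const_mul w).integrableOn
          hint.integrableOn measurableSet_Ioi fun x (hx : w < x) =>
            mul_le_mul_of_nonneg_right hx.le (gaussianPDFReal_nonneg 0 1 x)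
    _ = φ w := hFTC

end Gaussian

section SteinEquation

variable {h : ℝ → ℝ} {C : ℝ}

/-- The bounded solution `g` of the Stein equation `g' w - w * g w = h w - E[h(Z)]` for a standard
normal `Z`. -/
def steinSolution (h : ℝ → ℝ) (w : ℝ) : ℝ :=
  (φ w)⁻¹ * ∫ x in Set.Iic w, (h x - ∫ y, h y ∂γ) ∂γ

/-- The derivative of `steinSolution h`, as prescribed by the Stein equation. -/
def steinSolutionDeriv (h : ℝ → ℝ) (w : ℝ) : ℝ :=
  w * steinSolution h w + (h w - ∫ y, h y ∂γ)

lemma hasDerivAt_setIntegral_Iic_gaussianReal {g : ℝ → ℝ} (hg : Continuous g)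
    (hgi : Integrable g γ) (w : ℝ) :
    HasDerivAt (fun w => ∫ x in Set.Iic w, g x ∂γ) (φ w * g w) w := by
  have hφg : Integrable fun x => φ x * g x := by
    rw [gaussianReal_of_var_ne_zero 0 one_ne_zero,
      integrable_withDensity_iff_integrable_smul' (measurable_gaussianPDF 0 1)
        (Eventually.of_forall fun _ => gaussianPDF_lt_top)] at hgi
    simpa only [toReal_gaussianPDF, smul_eq_mul] using hgi
  have hsplit : (fun w => ∫ x in Set.Iic w, g x ∂γ) =
      fun w => (∫ x in Set.Iic 0, φ x * g x) + ∫ x in 0..w, φ x * g x := by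
    ext w
    rw [setIntegral_gaussianReal measurableSet_Iic,
      ← intervalIntegral.integral_Iic_sub_Iic hφg.integrableOn hφg.integrableOn]
    ring
  rw [hsplit]
  exact ((continuous_gaussianPDFReal_zero_one.mul hg).integral_hasStrictDerivAt 0
    w).hasDerivAt.const_add _

lemma hasDerivAt_steinSolution (hc : Continuous h) (hi : Integrable h γ) (w : ℝ) :
    HasDerivAt (steinSolution h) (steinSolutionDeriv h w) w := by
  have hφ := (gaussianPDFReal_zero_one_pos w).ne'
  have hint := hasDerivAt_setIntegral_Iic_gaussianReal (hc.sub continuous_const)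
    (hi.sub (integrable_const (∫ y, h y ∂γ))) w
  refine (((hasDerivAt_gaussianPDFReal_zero_one w).inv hφ).mul hint).congr_deriv ?_
  simp only [steinSolutionDeriv, steinSolution, Pi.inv_apply, Pi.sub_apply]
  field_simp

lemma continuous_steinSolution (hc : Continuous h) (hi : Integrable h γ) :
    Continuous (steinSolution h) :=
  continuous_iff_continuousAt.2 fun w => (hasDerivAt_steinSolution hc hi w).continuousAt

lemma continuous_steinSolutionDeriv (hc : Continuous h) (hi : Integrable h γ) :
    Continuous (steinSolutionDeriv h) :=
  (continuous_id.mul (continuous_steinSolution hc hi)).add (hc.sub continuous_const)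

lemma abs_setIntegral_Iic_gaussianReal_le {g : ℝ → ℝ} (hgi : Integrable g γ)
    (hg0 : ∫ x, g x ∂γ = 0) (hgC : ∀ x, |g x| ≤ C) (w : ℝ) :
    |∫ x in Set.Iic w, g x ∂γ| ≤ C * (γ).real (Set.Ioi |w|) := by
  have hset (s : Set ℝ) : |∫ x in s, g x ∂γ| ≤ C * (γ).real s :=
    norm_setIntegral_le_of_norm_le_const (f := g) (measure_lt_top γ s) fun x _ => hgC x
  rcases le_total 0 w with hw | hw
  · have hcompl : ∫ x in Set.Iic w, g x ∂γ = -∫ x in Set.Ioi w, g x ∂γ := by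
      have hadd := integral_add_compl (measurableSet_Iic (a := w)) hgi
      rw [hg0, Set.compl_Iic] at hadd
      linarith
    rw [hcompl, abs_neg, abs_of_nonneg hw]
    exact hset _
  · rw [abs_of_nonpos hw, ← measureReal_gaussianReal_Iic_neg, neg_neg]
    exact hset _

lemma abs_steinSolution_le_mul_tail (hi : Integrable h γ)
    (hC : ∀ x, |h x - ∫ y, h y ∂γ| ≤ C) (w : ℝ) :
    |steinSolution h w| ≤ (φ w)⁻¹ * (C * (γ).real (Set.Ioi |w|)) := by
  have hmean : ∫ x, (h x - ∫ y, h y ∂γ) ∂γ = 0 := by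
    rw [integral_sub hi (integrable_const _), integral_const, probReal_univ, one_smul, sub_self]
  have hφ := inv_pos.2 (gaussianPDFReal_zero_one_pos w)
  rw [steinSolution, abs_mul, abs_of_pos hφ]
  exact mul_le_mul_of_nonneg_left (abs_setIntegral_Iic_gaussianReal_le
    (hi.sub (integrable_const _)) hmean hC w) hφ.le

lemma abs_steinSolution_le (hi : Integrable h γ) (hC : ∀ x, |h x - ∫ y, h y ∂γ| ≤ C) (w : ℝ) :
    |steinSolution h w| ≤ C * √(2 * Real.pi) := by
  have hC0 : 0 ≤ C := (abs_nonneg _).trans (hC 0)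
  have hφ := gaussianPDFReal_zero_one_pos w
  have htail := measureReal_gaussianReal_Ioi_le (abs_nonneg w)
  rw [gaussianPDFReal_zero_one_abs] at htail
  calc |steinSolution h w| ≤ (φ w)⁻¹ * (C * (γ).real (Set.Ioi |w|)) :=
        abs_steinSolution_le_mul_tail hi hC w
    _ ≤ (φ w)⁻¹ * (C * (√(2 * Real.pi) * φ w)) := by gcongr
    _ = C * √(2 * Real.pi) := by field_simp

lemma abs_mul_steinSolution_le (hi : Integrable h γ) (hC : ∀ x, |h x - ∫ y, h y ∂γ| ≤ C)
    (w : ℝ) : |w * steinSolution h w| ≤ C := by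
  have hC0 : 0 ≤ C := (abs_nonneg _).trans (hC 0)
  have hφ := gaussianPDFReal_zero_one_pos w
  have htail := mul_measureReal_gaussianReal_Ioi_le |w|
  rw [gaussianPDFReal_zero_one_abs] at htail
  calc |w * steinSolution h w| = |w| * |steinSolution h w| := abs_mul _ _
    _ ≤ |w| * ((φ w)⁻¹ * (C * (γ).real (Set.Ioi |w|))) := by
        gcongr
        exact abs_steinSolution_le_mul_tail hi hC w
    _ = (φ w)⁻¹ * (C * (|w| * (γ).real (Set.Ioi |w|))) := by ring
    _ ≤ (φ w)⁻¹ * (C * φ w) := by gcongr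
    _ = C := by field_simp

lemma abs_steinSolutionDeriv_le (hi : Integrable h γ) (hC : ∀ x, |h x - ∫ y, h y ∂γ| ≤ C)
    (w : ℝ) : |steinSolutionDeriv h w| ≤ 2 * C := by
  calc |steinSolutionDeriv h w| ≤ |w * steinSolution h w| + |h w - ∫ y, h y ∂γ| :=
        abs_add_le _ _
    _ ≤ 2 * C := by linarith [abs_mul_steinSolution_le hi hC w, hC w]

lemma integral_map_sub_integral_gaussianReal {Ω : Type*} [MeasurableSpace Ω] {μ : Measure Ω}
    [IsProbabilityMeasure μ] {W : Ω → ℝ} (hW : AEMeasurable W μ) (hi : Integrable h (μ.map W)) :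
    ∫ x, h x ∂μ.map W - ∫ x, h x ∂γ =
      ∫ ω, (steinSolutionDeriv h (W ω) - W ω * steinSolution h (W ω)) ∂μ := by
  have hhW : Integrable (fun ω => h (W ω)) μ := hi.comp_aemeasurable hW
  simp only [steinSolutionDeriv, add_sub_cancel_left]
  rw [integral_sub hhW (integrable_const _), integral_map hW hi.aestronglyMeasurable,
    integral_const, probReal_univ, one_smul]

end SteinEquation

section Taylor

lemma abs_sub_sub_mul_deriv_le {f f' : ℝ → ℝ} {w η K : ℝ} (hf : ∀ x, HasDerivAt f (f' x) x)
    (hK : ∀ y, |y - w| ≤ |η| → |f' y - f' w| ≤ |η| * K) :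
    |f w - f (w - η) - η * f' w| ≤ η ^ 2 * K := by
  have hderiv (y : ℝ) : HasDerivAt (fun y => f y - y * f' w) (f' y - f' w) y :=
    (hf y).fun_sub (hasDerivAt_mul_const (f' w))
  have hmem : w - η ∈ Metric.closedBall w |η| := by simp
  have hball := (convex_closedBall w |η|).norm_image_sub_le_of_norm_hasDerivWithin_le
    (fun y _ => (hderiv y).hasDerivWithinAt) hK hmem (Metric.mem_closedBall_self (abs_nonneg η))
  calc |f w - f (w - η) - η * f' w| = |f w - w * f' w - (f (w - η) - (w - η) * f' w)| := by ring_nf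
    _ ≤ |η| * K * |w - (w - η)| := hball
    _ = η ^ 2 * K := by rw [sub_sub_cancel, mul_right_comm, abs_mul_abs_self, sq]

variable {h : ℝ → ℝ} {A B K δ w : ℝ}

lemma abs_steinSolutionDeriv_sub_le (hc : Continuous h) (hi : Integrable h γ)
    (hA : ∀ x, |steinSolution h x| ≤ A) (hB : ∀ x, |steinSolutionDeriv h x| ≤ B) {y : ℝ}
    (hK : |h y - h w| ≤ |y - w| * K) :
    |steinSolutionDeriv h y - steinSolutionDeriv h w| ≤ |y - w| * (A + B * |w| + K) := by
  have hLip : |steinSolution h y - steinSolution h w| ≤ B * |y - w| :=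
    convex_univ.norm_image_sub_le_of_norm_hasDerivWithin_le
      (fun x _ => (hasDerivAt_steinSolution hc hi x).hasDerivWithinAt) (fun x _ => hB x)
      (Set.mem_univ w) (Set.mem_univ y)
  calc |steinSolutionDeriv h y - steinSolutionDeriv h w|
      = |(y - w) * steinSolution h y + w * (steinSolution h y - steinSolution h w)
          + (h y - h w)| := by
        simp only [steinSolutionDeriv]
        ring_nf
    _ ≤ |y - w| * |steinSolution h y| + |w| * |steinSolution h y - steinSolution h w|
          + |h y - h w| := by
        simpa only [abs_mul] using abs_add_three ((y - w) * steinSolution h y)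
          (w * (steinSolution h y - steinSolution h w)) (h y - h w)
    _ ≤ |y - w| * A + |w| * (B * |y - w|) + |y - w| * K := by
        gcongr
        exact hA y
    _ = |y - w| * (A + B * |w| + K) := by ring

lemma abs_steinSolution_sub_sub_mul_le (hc : Continuous h) (hi : Integrable h γ)
    (hA : ∀ x, |steinSolution h x| ≤ A) (hB : ∀ x, |steinSolutionDeriv h x| ≤ B)
    (hK0 : 0 ≤ K) (hK : ∀ y, |y - w| ≤ δ → |h y - h w| ≤ |y - w| * K) {η : ℝ} (hη : |η| ≤ δ) :
    |steinSolution h w - steinSolution h (w - η) - η * steinSolutionDeriv h w| ≤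
      η ^ 2 * (A + B * |w| + K) := by
  have hA0 : 0 ≤ A := (abs_nonneg _).trans (hA 0)
  have hB0 : 0 ≤ B := (abs_nonneg _).trans (hB 0)
  refine abs_sub_sub_mul_deriv_le (hasDerivAt_steinSolution hc hi) fun y hy => ?_
  exact (abs_steinSolutionDeriv_sub_le hc hi hA hB (hK y (hy.trans hη))).trans (by gcongr)

end Taylor

section Ramp

variable {z ε x y : ℝ}

/-- The continuous surrogate of the indicator of `(-∞, z]` which decreases linearly from `1` to
`0` on `[z, z + ε]`. -/
def ramp (z ε x : ℝ) : ℝ := max 0 (min 1 ((z + ε - x) / ε))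

lemma continuous_ramp : Continuous (ramp z ε) := by
  unfold ramp
  fun_prop

lemma ramp_nonneg : 0 ≤ ramp z ε x := le_max_left _ _

lemma ramp_le_one : ramp z ε x ≤ 1 := max_le zero_le_one (min_le_left _ _)

lemma ramp_eq_one (hε : 0 < ε) (hx : x ≤ z) : ramp z ε x = 1 := by
  have hle : 1 ≤ (z + ε - x) / ε := by rw [le_div_iff₀ hε]; linarith
  rw [ramp, min_eq_left hle, max_eq_right zero_le_one]

lemma ramp_eq_zero (hε : 0 < ε) (hx : z + ε ≤ x) : ramp z ε x = 0 := by
  have hle : (z + ε - x) / ε ≤ 0 := div_nonpos_of_nonpos_of_nonneg (by linarith) hε.le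
  exact max_eq_left ((min_le_right _ _).trans hle)

lemma abs_ramp_sub_le (hε : 0 < ε) : |ramp z ε y - ramp z ε x| ≤ |y - x| * ε⁻¹ := by
  calc |ramp z ε y - ramp z ε x|
      ≤ |min 1 ((z + ε - y) / ε) - min 1 ((z + ε - x) / ε)| := by
        simpa [ramp] using abs_max_sub_max_le_max 0 (min 1 ((z + ε - y) / ε)) 0
          (min 1 ((z + ε - x) / ε))
    _ ≤ |(z + ε - y) / ε - (z + ε - x) / ε| := by
        simpa using abs_min_sub_min_le_max 1 ((z + ε - y) / ε) 1 ((z + ε - x) / ε)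
    _ = |y - x| * ε⁻¹ := by
        rw [← sub_div, sub_sub_sub_cancel_left, abs_div, abs_of_pos hε, abs_sub_comm,
          div_eq_mul_inv]

lemma abs_ramp_sub_le_indicator (hε : 0 < ε) {δ : ℝ} (hy : |y - x| ≤ δ) :
    |ramp z ε y - ramp z ε x| ≤
      |y - x| * (Set.Icc (z - δ) (z + ε + δ)).indicator (fun _ => ε⁻¹) x := by
  obtain ⟨hyl, hyu⟩ := abs_le.1 hy
  by_cases hx : x ∈ Set.Icc (z - δ) (z + ε + δ)
  · rw [Set.indicator_of_mem hx]
    exact abs_ramp_sub_le hε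
  · rw [Set.indicator_of_notMem hx, mul_zero]
    rcases lt_or_ge x (z - δ) with hlt | hge
    · rw [ramp_eq_one hε (by linarith : y ≤ z), ramp_eq_one hε (by linarith : x ≤ z), sub_self,
        abs_zero]
    · have hgt : z + ε + δ < x := not_le.1 fun hle => hx ⟨hge, hle⟩
      rw [ramp_eq_zero hε (by linarith : z + ε ≤ y), ramp_eq_zero hε (by linarith : z + ε ≤ x),
        sub_self, abs_zero]

variable {ν : Measure ℝ} [IsProbabilityMeasure ν]

lemma integrable_ramp : Integrable (ramp z ε) ν :=
  .of_bound continuous_ramp.aestronglyMeasurable 1 <| Eventually.of_forall fun _ => by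
    rw [Real.norm_of_nonneg ramp_nonneg]
    exact ramp_le_one

lemma measureReal_Iic_le_integral_ramp (hε : 0 < ε) : ν.real (Set.Iic z) ≤ ∫ x, ramp z ε x ∂ν := by
  rw [← integral_indicator_one measurableSet_Iic]
  refine integral_mono ((integrable_const 1).indicator measurableSet_Iic) integrable_ramp
    fun x => ?_
  exact Set.indicator_apply_le' (fun hx => (ramp_eq_one hε hx).ge) fun _ => ramp_nonneg

lemma integral_ramp_le_measureReal_Iic (hε : 0 < ε) :
    ∫ x, ramp z ε x ∂ν ≤ ν.real (Set.Iic (z + ε)) := by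
  rw [← integral_indicator_one measurableSet_Iic]
  refine integral_mono integrable_ramp ((integrable_const 1).indicator measurableSet_Iic)
    fun x => ?_
  refine Set.le_indicator_apply (fun _ => ramp_le_one) fun hx => ?_
  exact (ramp_eq_zero hε (not_le.1 hx).le).le

lemma abs_ramp_sub_integral_le_one : |ramp z ε x - ∫ y, ramp z ε y ∂ν| ≤ 1 := by
  have hnonneg : 0 ≤ ∫ y, ramp z ε y ∂ν := integral_nonneg fun _ => ramp_nonneg
  have hle : ∫ y, ramp z ε y ∂ν ≤ 1 := by
    simpa using integral_mono integrable_ramp (integrable_const (1 : ℝ))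
      (fun y => ramp_le_one (x := y) (z := z) (ε := ε)) (μ := ν)
  exact abs_sub_le_of_nonneg_of_le ramp_nonneg ramp_le_one hnonneg hle

lemma abs_measureReal_Iic_sub_gaussianReal_le {s : ℝ} (hε : 0 < ε)
    (hs : ∀ z, |∫ x, ramp z ε x ∂ν - ∫ x, ramp z ε x ∂γ| ≤ s) (z : ℝ) :
    |ν.real (Set.Iic z) - (γ).real (Set.Iic z)| ≤ s + ε / 2 := by
  have hupper := (abs_le.1 (hs z)).2
  have hlower := (abs_le.1 (hs (z - ε))).1
  have hν := measureReal_Iic_le_integral_ramp (ν := ν) (z := z) hε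
  have hγ := integral_ramp_le_measureReal_Iic (ν := γ) (z := z) hε
  have hν' := integral_ramp_le_measureReal_Iic (ν := ν) (z := z - ε) hε
  have hγ' := measureReal_Iic_le_integral_ramp (ν := γ) (z := z - ε) hε
  have hinc := measureReal_gaussianReal_Iic_sub_le (a := z) (b := z + ε) (by linarith)
  have hinc' := measureReal_gaussianReal_Iic_sub_le (a := z - ε) (b := z) (by linarith)
  rw [sub_add_cancel] at hν'
  rw [abs_le]
  constructor <;> linarith

end Ramp

section SteinRamp

variable {z ε w : ℝ}

lemma abs_steinSolution_ramp_le : |steinSolution (ramp z ε) w| ≤ 3 :=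
  calc |steinSolution (ramp z ε) w| ≤ 1 * √(2 * Real.pi) :=
        abs_steinSolution_le integrable_ramp (fun _ => abs_ramp_sub_integral_le_one) w
    _ ≤ 3 := by
        rw [one_mul]
        exact Real.sqrt_le_iff.2 ⟨by norm_num, by linarith [Real.pi_lt_four]⟩

lemma abs_steinSolutionDeriv_ramp_le : |steinSolutionDeriv (ramp z ε) w| ≤ 2 :=
  (abs_steinSolutionDeriv_le integrable_ramp (fun _ => abs_ramp_sub_integral_le_one) w).trans_eq
    (mul_one 2)

lemma abs_steinSolution_ramp_sub_sub_mul_le {δ η : ℝ} (hε : 0 < ε) (hη : |η| ≤ δ) :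
    |steinSolution (ramp z ε) w - steinSolution (ramp z ε) (w - η)
        - η * steinSolutionDeriv (ramp z ε) w| ≤
      η ^ 2 * (3 + 2 * |w| + (Set.Icc (z - δ) (z + ε + δ)).indicator (fun _ => ε⁻¹) w) :=
  abs_steinSolution_sub_sub_mul_le continuous_ramp integrable_ramp
    (fun _ => abs_steinSolution_ramp_le) (fun _ => abs_steinSolutionDeriv_ramp_le)
    (Set.indicator_nonneg (fun _ _ => (inv_pos.2 hε).le) w)
    (fun _ hy => abs_ramp_sub_le_indicator hε hy) hη

end SteinRamp

section Kolmogorov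

lemma measureReal_Icc_le_of_abs_sub_gaussianReal_le {ν : Measure ℝ} [IsFiniteMeasure ν] {κ a b : ℝ}
    (hκ : ∀ t, |ν.real (Set.Iic t) - (γ).real (Set.Iic t)| ≤ κ) (hab : a ≤ b) :
    ν.real (Set.Icc a b) ≤ 2 * κ + (b - a) / 2 := by
  refine le_of_forall_pos_le_add fun δ hδ => ?_
  have hsub : Set.Icc a b ⊆ Set.Iic b \ Set.Iic (a - δ) := fun x hx =>
    ⟨hx.2, fun hxa : x ≤ a - δ => by linarith [hx.1]⟩
  calc ν.real (Set.Icc a b) ≤ ν.real (Set.Iic b \ Set.Iic (a - δ)) := measureReal_mono hsub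
    _ = ν.real (Set.Iic b) - ν.real (Set.Iic (a - δ)) :=
        measureReal_sdiff (Set.Iic_subset_Iic.2 (by linarith)) measurableSet_Iic
    _ ≤ ((γ).real (Set.Iic b) + κ) - ((γ).real (Set.Iic (a - δ)) - κ) := by
        linarith [(abs_le.1 (hκ b)).2, (abs_le.1 (hκ (a - δ))).1]
    _ ≤ 2 * κ + (b - a) / 2 + δ := by
        linarith [measureReal_gaussianReal_Iic_sub_le (a := a - δ) (b := b) (by linarith)]

variable {Ω : Type*} [MeasurableSpace Ω] {μ : Measure Ω} {W : Ω → ℝ}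

lemma dKolNormal_eq_iSup_map (hW : AEMeasurable W μ) :
    dKolNormal μ W = ⨆ t, |(μ.map W).real (Set.Iic t) - (γ).real (Set.Iic t)| :=
  iSup_congr fun t => by
    rw [map_measureReal_apply_of_aemeasurable hW measurableSet_Iic]
    rfl

lemma dKolNormal_le {κ : ℝ} (hW : AEMeasurable W μ)
    (hκ : ∀ t, |(μ.map W).real (Set.Iic t) - (γ).real (Set.Iic t)| ≤ κ) : dKolNormal μ W ≤ κ := by
  rw [dKolNormal_eq_iSup_map hW]
  exact ciSup_le hκ

lemma abs_sub_le_dKolNormal [IsProbabilityMeasure μ] (hW : AEMeasurable W μ) (t : ℝ) :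
    |(μ.map W).real (Set.Iic t) - (γ).real (Set.Iic t)| ≤ dKolNormal μ W := by
  have := Measure.isProbabilityMeasure_map hW
  rw [dKolNormal_eq_iSup_map hW]
  refine le_ciSup (f := fun t => |(μ.map W).real (Set.Iic t) - (γ).real (Set.Iic t)|) ⟨1, ?_⟩ t
  rintro _ ⟨s, rfl⟩
  exact abs_sub_le_of_nonneg_of_le measureReal_nonneg measureReal_le_one measureReal_nonneg
    measureReal_le_one

/-- The centred and normalised version `(W - E[W]) / √Var[W]` of `W`. -/
def standardize (μ : Measure Ω) (W : Ω → ℝ) : Ω → ℝ :=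
  fun ω => (W ω - ∫ ω', W ω' ∂μ) / √(variance W μ)

lemma standardize_const_mul {k : ℝ} (hk : 0 < k) :
    standardize μ (fun ω => k * W ω) = standardize μ W := by
  ext ω
  rw [standardize, standardize, integral_const_mul, variance_const_mul, ← mul_sub,
    Real.sqrt_mul (sq_nonneg k), Real.sqrt_sq hk.le, mul_div_mul_left _ _ hk.ne']

end Kolmogorov

section Variance

variable {Ω κ : Type*} [MeasurableSpace Ω] {μ : Measure Ω} [IsProbabilityMeasure μ]

lemma variance_le_sq_of_abs_sub_le {X : Ω → ℝ} {c L : ℝ} (hX : AEMeasurable X μ)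
    (hL : ∀ᵐ ω ∂μ, |X ω - c| ≤ L) : variance X μ ≤ L ^ 2 := by
  have hIcc : ∀ᵐ ω ∂μ, X ω ∈ Set.Icc (c - L) (c + L) := hL.mono fun ω hω => by
    constructor <;> linarith [abs_le.1 hω]
  exact (variance_le_sq_of_bounded hIcc hX).trans_eq (by ring)

lemma integral_abs_sub_integral_le_sqrt_variance {X : Ω → ℝ} (hX : MemLp X 2 μ) :
    ∫ ω, |X ω - ∫ ω', X ω' ∂μ| ∂μ ≤ √(variance X μ) := by
  refine Real.le_sqrt_of_sq_le ?_
  have hvar := variance_eq_sub (hX.sub (memLp_const (∫ ω', X ω' ∂μ))).abs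
  simp only [Pi.pow_apply, Pi.abs_apply, Pi.sub_apply, sq_abs] at hvar
  rw [variance_eq_integral hX.aemeasurable]
  exact sub_nonneg.1 (hvar ▸ variance_nonneg _ μ)

lemma covariance_le_of_variance_le {X Y : Ω → ℝ} {v : ℝ} (hX : MemLp X 2 μ) (hY : MemLp Y 2 μ)
    (hXv : variance X μ ≤ v) (hYv : variance Y μ ≤ v) : cov[X, Y; μ] ≤ v := by
  linarith [variance_nonneg (X - Y) μ, variance_sub hX hY]

lemma variance_sum_le_of_covariance_eq_zero {S : Finset κ} {Z : κ → Ω → ℝ} {Q : κ → Finset κ}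
    {k : ℕ} {v : ℝ} (hv : 0 ≤ v) (hZ : ∀ p ∈ S, MemLp (Z p) 2 μ)
    (hZv : ∀ p ∈ S, variance (Z p) μ ≤ v) (hQ : ∀ p ∈ S, (Q p).card ≤ k)
    (hcov : ∀ p ∈ S, ∀ q ∈ S, q ∉ Q p → cov[Z p, Z q; μ] = 0) :
    variance (fun ω => ∑ p ∈ S, Z p ω) μ ≤ S.card * k * v := by
  classical
  have hrow : ∀ p ∈ S, ∑ q ∈ S, cov[Z p, Z q; μ] ≤ k * v := fun p hp =>
    calc ∑ q ∈ S, cov[Z p, Z q; μ] = ∑ q ∈ S with q ∈ Q p, cov[Z p, Z q; μ] := by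
          rw [Finset.sum_filter]
          refine Finset.sum_congr rfl fun q hq => ?_
          split_ifs with hqp
          exacts [rfl, hcov p hp q hq hqp]
      _ ≤ ({q ∈ S | q ∈ Q p} : Finset κ).card • v := Finset.sum_le_card_nsmul _ _ _ fun q hq => by
          have hqS := Finset.mem_of_mem_filter q hq
          exact covariance_le_of_variance_le (hZ p hp) (hZ q hqS) (hZv p hp) (hZv q hqS)
      _ ≤ k * v := by
          rw [nsmul_eq_mul]
          gcongr
          exact (Finset.card_le_card fun q hq => (Finset.mem_filter.1 hq).2).trans (hQ p hp)
  calc variance (fun ω => ∑ p ∈ S, Z p ω) μ = ∑ p ∈ S, ∑ q ∈ S, cov[Z p, Z q; μ] :=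
        variance_fun_sum' hZ
    _ ≤ S.card • (k * v) := Finset.sum_le_card_nsmul _ _ _ hrow
    _ = S.card * k * v := by rw [nsmul_eq_mul, mul_assoc]

end Variance

section ClosedNeighbourhood

variable {ι : Type*} [Fintype ι] [DecidableEq ι] (H : SimpleGraph ι) [DecidableRel H.Adj]

/-- The closed neighbourhood of a vertex: the vertex itself and its neighbours. -/
def closedNbhd (i : ι) : Finset ι := insert i (H.neighborFinset i)

/-- The ordered pairs of equal or adjacent vertices. -/
def closedPairs : Finset (ι × ι) := {p | p.2 ∈ closedNbhd H p.1}

variable {H} {i j : ι} {D : ℕ}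

lemma mem_closedNbhd : j ∈ closedNbhd H i ↔ j = i ∨ H.Adj i j := by
  rw [closedNbhd, Finset.mem_insert, SimpleGraph.mem_neighborFinset]

lemma mem_closedNbhd_comm : j ∈ closedNbhd H i ↔ i ∈ closedNbhd H j := by
  rw [mem_closedNbhd, mem_closedNbhd, eq_comm, H.adj_comm]

lemma mem_closedPairs {p : ι × ι} : p ∈ closedPairs H ↔ p.2 ∈ closedNbhd H p.1 := by
  simp only [closedPairs, Finset.mem_filter_univ]

lemma sum_closedPairs {M : Type*} [AddCommMonoid M] (F : ι × ι → M) :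
    ∑ p ∈ closedPairs H, F p = ∑ i, ∑ j ∈ closedNbhd H i, F (i, j) :=
  Finset.sum_finset_product _ _ _ fun p => by
    simp only [mem_closedPairs, Finset.mem_univ, true_and]

variable (hD : ∀ i, (closedNbhd H i).card ≤ D)
include hD

lemma sum_card_closedNbhd_le (M : Finset ι) : ∑ i ∈ M, (closedNbhd H i).card ≤ M.card * D :=
  Finset.sum_le_card_nsmul _ _ _ fun i _ => hD i

lemma card_closedPairs_le : (closedPairs H).card ≤ Fintype.card ι * D := by
  rw [Finset.card_eq_sum_ones, sum_closedPairs]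
  simpa only [← Finset.card_eq_sum_ones, Finset.card_univ] using
    sum_card_closedNbhd_le hD Finset.univ

lemma card_closedPairs_filter_mem_le (M : Finset ι) :
    ({p ∈ closedPairs H | p.1 ∈ M ∨ p.2 ∈ M} : Finset (ι × ι)).card ≤ 2 * (M.card * D) := by
  have hfst : ({p ∈ closedPairs H | p.1 ∈ M} : Finset (ι × ι)).card ≤ M.card * D := by
    rw [Finset.card_eq_sum_ones, Finset.sum_finset_product _ M (closedNbhd H) fun p => by
      rw [Finset.mem_filter, mem_closedPairs, and_comm]]
    simpa only [← Finset.card_eq_sum_ones] using sum_card_closedNbhd_le hD M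
  have hsnd : ({p ∈ closedPairs H | p.2 ∈ M} : Finset (ι × ι)).card ≤ M.card * D := by
    rw [Finset.card_eq_sum_ones, Finset.sum_finset_product_right _ M (closedNbhd H) fun p => by
      rw [Finset.mem_filter, mem_closedPairs, mem_closedNbhd_comm, and_comm]]
    simpa only [← Finset.card_eq_sum_ones] using sum_card_closedNbhd_le hD M
  rw [Finset.filter_or, two_mul]
  exact (Finset.card_union_le _ _).trans (add_le_add hfst hsnd)

end ClosedNeighbourhood

section DependencyGraph

variable {Ω V E F : Type*} [MeasurableSpace Ω] [MeasurableSpace E] [MeasurableSpace F]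
  {μ : Measure Ω} {H : SimpleGraph V}

lemma IsDependencyGraph.comp {Y : V → Ω → E} (hY : IsDependencyGraph μ H Y) {g : V → E → F}
    (hg : ∀ v, Measurable (g v)) : IsDependencyGraph μ H fun v ω => g v (Y v ω) := by
  intro V₁ V₂ hdisj hadj
  have hmeas (S : Set V) : Measurable fun (y : S → E) (v : S) => g v (y v) :=
    measurable_pi_lambda _ fun v => (hg v).comp (measurable_pi_apply v)
  exact (hY V₁ V₂ hdisj hadj).comp (hmeas V₁) (hmeas V₂)

variable [Fintype V] [DecidableEq V] [DecidableRel H.Adj]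

lemma IsDependencyGraph.indepFun_restrict {Y : V → Ω → E} (hY : IsDependencyGraph μ H Y)
    {S T : Finset V} (hST : ∀ i ∈ S, ∀ j ∈ T, j ∉ closedNbhd H i) :
    IndepFun (fun ω (i : S) => Y i ω) (fun ω (j : T) => Y j ω) μ :=
  hY S T
    (Set.disjoint_left.2 fun i hiS hiT => hST i hiS i hiT (mem_closedNbhd.2 (.inl rfl)))
    fun i hi j hj hadj => hST i hi j hj (mem_closedNbhd.2 (.inr hadj))

lemma IsDependencyGraph.indepFun {Y : V → Ω → E} (hY : IsDependencyGraph μ H Y) {i j : V}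
    (hij : j ∉ closedNbhd H i) : IndepFun (Y i) (Y j) μ := by
  have hind := hY.indepFun_restrict (S := {i}) (T := {j}) (by simpa using hij)
  exact hind.comp (measurable_pi_apply (⟨i, Finset.mem_singleton_self i⟩ : ({i} : Finset V)))
    (measurable_pi_apply (⟨j, Finset.mem_singleton_self j⟩ : ({j} : Finset V)))

variable {Y : V → Ω → ℝ}

lemma IsDependencyGraph.indepFun_sum_compl (hY : IsDependencyGraph μ H Y) (i : V) :
    IndepFun (Y i) (fun ω => ∑ j ∈ (closedNbhd H i)ᶜ, Y j ω) μ := by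
  have hind := hY.indepFun_restrict (S := {i}) (T := (closedNbhd H i)ᶜ) (by simp)
  have hcomp := hind.comp
    (measurable_pi_apply (⟨i, Finset.mem_singleton_self i⟩ : ({i} : Finset V)))
    (ψ := fun y => ∑ j, y j) (by fun_prop)
  have hsum (ω : Ω) : ∑ j : ↥(closedNbhd H i)ᶜ, Y j ω = ∑ j ∈ (closedNbhd H i)ᶜ, Y j ω :=
    Finset.sum_coe_sort _ fun j => Y j ω
  simpa only [Function.comp_def, hsum] using hcomp

lemma IsDependencyGraph.indepFun_mul (hY : IsDependencyGraph μ H Y) {i j k l : V}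
    (hk : k ∉ closedNbhd H i ∪ closedNbhd H j) (hl : l ∉ closedNbhd H i ∪ closedNbhd H j) :
    IndepFun (fun ω => Y i ω * Y j ω) (fun ω => Y k ω * Y l ω) μ := by
  rw [Finset.notMem_union] at hk hl
  have hind := hY.indepFun_restrict (S := {i, j}) (T := {k, l}) (by simp [hk, hl])
  have hmul (a b : V) : Measurable fun y : ({a, b} : Finset V) → ℝ =>
      y ⟨a, by simp⟩ * y ⟨b, by simp⟩ := by fun_prop
  exact hind.comp (hmul i j) (hmul k l)

variable [IsProbabilityMeasure μ] {D : ℕ}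

lemma IsDependencyGraph.variance_sum_le (hY : IsDependencyGraph μ H Y)
    (hD : ∀ i, (closedNbhd H i).card ≤ D) (hmem : ∀ i, MemLp (Y i) 2 μ) {v : ℝ} (hv : 0 ≤ v)
    (hYv : ∀ i, variance (Y i) μ ≤ v) :
    variance (fun ω => ∑ i, Y i ω) μ ≤ Fintype.card V * D * v :=
  variance_sum_le_of_covariance_eq_zero hv (fun i _ => hmem i) (fun i _ => hYv i)
    (fun i _ => hD i) fun i _ j _ hij => (hY.indepFun hij).covariance_eq_zero (hmem i) (hmem j)

lemma IsDependencyGraph.variance_sum_mul_le (hY : IsDependencyGraph μ H Y)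
    (hD : ∀ i, (closedNbhd H i).card ≤ D) (hmeas : ∀ i, AEMeasurable (Y i) μ) {b : ℝ}
    (hb : ∀ i, ∀ᵐ ω ∂μ, |Y i ω| ≤ b) :
    variance (fun ω => ∑ p ∈ closedPairs H, Y p.1 ω * Y p.2 ω) μ ≤
      4 * Fintype.card V * D ^ 3 * b ^ 4 := by
  set M : V × V → Finset V := fun p => closedNbhd H p.1 ∪ closedNbhd H p.2
  have hM (p : V × V) : (M p).card ≤ 2 * D :=
    (Finset.card_union_le _ _).trans (by linarith [hD p.1, hD p.2])
  have hprod (p : V × V) : AEStronglyMeasurable (fun ω => Y p.1 ω * Y p.2 ω) μ :=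
    ((hmeas p.1).mul (hmeas p.2)).aestronglyMeasurable
  have hbound (p : V × V) : ∀ᵐ ω ∂μ, |Y p.1 ω * Y p.2 ω| ≤ b ^ 2 := by
    filter_upwards [hb p.1, hb p.2] with ω h₁ h₂
    rw [abs_mul, sq]
    exact mul_le_mul h₁ h₂ (abs_nonneg _) ((abs_nonneg _).trans h₁)
  have hmem (p : V × V) : MemLp (fun ω => Y p.1 ω * Y p.2 ω) 2 μ :=
    .of_bound (hprod p) (b ^ 2) (hbound p)
  have hvar := variance_sum_le_of_covariance_eq_zero (S := closedPairs H)
    (Q := fun p => {q ∈ closedPairs H | q.1 ∈ M p ∨ q.2 ∈ M p})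
    (v := (b ^ 2) ^ 2) (k := 2 * (2 * D * D)) (by positivity) (fun p _ => hmem p)
    (fun p _ => variance_le_sq_of_abs_sub_le (hprod p).aemeasurable (c := 0)
      (by simpa only [sub_zero] using hbound p))
    (fun p _ => (card_closedPairs_filter_mem_le hD (M p)).trans (by gcongr; exact hM p))
    fun p _ q hq hqp => by
      rw [Finset.mem_filter, not_and, not_or] at hqp
      exact (hY.indepFun_mul (hqp hq).1 (hqp hq).2).covariance_eq_zero (hmem p) (hmem q)
  have hcard : ((closedPairs H).card : ℝ) ≤ Fintype.card V * D := by
    exact_mod_cast card_closedPairs_le hD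
  calc variance (fun ω => ∑ p ∈ closedPairs H, Y p.1 ω * Y p.2 ω) μ
      ≤ (closedPairs H).card * (2 * (2 * D * D) : ℕ) * (b ^ 2) ^ 2 := hvar
    _ ≤ (Fintype.card V * D) * (2 * (2 * D * D) : ℕ) * (b ^ 2) ^ 2 := by gcongr
    _ = 4 * Fintype.card V * D ^ 3 * b ^ 4 := by push_cast; ring

end DependencyGraph

section BoundedFamily

variable {Ω κ : Type*} [MeasurableSpace Ω] {μ : Measure Ω} [IsFiniteMeasure μ] {X : κ → Ω → ℝ}
  {b : ℝ} (hX : ∀ i, AEMeasurable (X i) μ) (hb : ∀ i, ∀ᵐ ω ∂μ, |X i ω| ≤ b)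
include hX hb

lemma memLp_of_abs_le (q : ENNReal) (i : κ) : MemLp (X i) q μ :=
  .of_bound (hX i).aestronglyMeasurable b (hb i)

lemma memLp_sum_of_abs_le (q : ENNReal) (S : Finset κ) : MemLp (fun ω => ∑ i ∈ S, X i ω) q μ :=
  memLp_finsetSum _ fun i _ => memLp_of_abs_le hX hb q i

lemma memLp_sum_mul_of_abs_le (q : ENNReal) (S : Finset (κ × κ)) :
    MemLp (fun ω => ∑ p ∈ S, X p.1 ω * X p.2 ω) q μ :=
  memLp_finsetSum _ fun p _ => (memLp_of_abs_le hX hb q p.2).mul' (memLp_of_abs_le hX hb ⊤ p.1)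

end BoundedFamily

section LocalDependence

variable {Ω V : Type*} [MeasurableSpace Ω] [Fintype V] [DecidableEq V] {H : SimpleGraph V}
  [DecidableRel H.Adj] {D : ℕ} {b : ℝ}

lemma abs_sum_closedNbhd_le {y : V → ℝ} (hD : ∀ i, (closedNbhd H i).card ≤ D)
    (hy : ∀ i, |y i| ≤ b) (i : V) : |∑ j ∈ closedNbhd H i, y j| ≤ D * b := by
  have hb0 : 0 ≤ b := (abs_nonneg _).trans (hy i)
  calc |∑ j ∈ closedNbhd H i, y j| ≤ ∑ j ∈ closedNbhd H i, |y j| := Finset.abs_sum_le_sum_abs _ _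
    _ ≤ (closedNbhd H i).card • b := Finset.sum_le_card_nsmul _ _ _ fun j _ => hy j
    _ ≤ D * b := by
        rw [nsmul_eq_mul]
        gcongr
        exact hD i

lemma abs_stein_decomposition_le {f f' K : ℝ → ℝ} {B : ℝ} (hB : ∀ w, |f' w| ≤ B)
    (hK : ∀ w η, |η| ≤ D * b → |f w - f (w - η) - η * f' w| ≤ η ^ 2 * K w) {y : V → ℝ}
    (hD : ∀ i, (closedNbhd H i).card ≤ D) (hy : ∀ i, |y i| ≤ b) (hK0 : 0 ≤ K (∑ i, y i)) :
    |f' (∑ i, y i) - (∑ i, y i) * f (∑ i, y i)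
        + ∑ i, y i * f (∑ j ∈ (closedNbhd H i)ᶜ, y j)| ≤
      B * |(∑ p ∈ closedPairs H, y p.1 * y p.2) - 1|
        + Fintype.card V * (b * (D * b) ^ 2) * K (∑ i, y i) := by
  set w := ∑ i, y i with hw
  set η : V → ℝ := fun i => ∑ j ∈ closedNbhd H i, y j
  have hη := abs_sum_closedNbhd_le hD hy
  have hcompl (i : V) : ∑ j ∈ (closedNbhd H i)ᶜ, y j = w - η i :=
    eq_sub_of_add_eq' (Finset.sum_add_sum_compl _ _)
  have hsplit : f' w - w * f w + ∑ i, y i * f (w - η i) =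
      -(f' w * ((∑ i, y i * η i) - 1)) - ∑ i, y i * (f w - f (w - η i) - η i * f' w) := by
    simp only [mul_sub, Finset.sum_sub_distrib, ← Finset.sum_mul, ← mul_assoc, ← hw]
    ring
  have hrem (i : V) : |y i * (f w - f (w - η i) - η i * f' w)| ≤ b * (D * b) ^ 2 * K w := by
    have hb0 : 0 ≤ b := (abs_nonneg _).trans (hy i)
    rw [abs_mul, mul_assoc, ← sq_abs (D * b : ℝ), abs_of_nonneg (by positivity : 0 ≤ D * b)]
    have hsq : η i ^ 2 ≤ (D * b) ^ 2 := sq_le_sq' (abs_le.1 (hη i)).1 (abs_le.1 (hη i)).2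
    exact mul_le_mul (hy i) ((hK w (η i) (hη i)).trans (by gcongr)) (abs_nonneg _) hb0
  simp only [sum_closedPairs, hcompl, ← Finset.mul_sum]
  rw [hsplit]
  calc |-(f' w * ((∑ i, y i * η i) - 1)) - ∑ i, y i * (f w - f (w - η i) - η i * f' w)|
      ≤ |f' w| * |(∑ i, y i * η i) - 1| + ∑ i, |y i * (f w - f (w - η i) - η i * f' w)| := by
        rw [← abs_mul, ← abs_neg (f' w * _)]
        exact (abs_sub _ _).trans (by gcongr; exact Finset.abs_sum_le_sum_abs _ _)
    _ ≤ B * |(∑ i, y i * η i) - 1| + Fintype.card V • (b * (D * b) ^ 2 * K w) := by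
        gcongr
        · exact hB w
        · exact Finset.sum_le_card_nsmul _ _ _ fun i _ => hrem i
    _ = B * |(∑ i, y i * η i) - 1| + Fintype.card V * (b * (D * b) ^ 2) * K w := by
        rw [nsmul_eq_mul, ← mul_assoc]

variable {μ : Measure Ω} {Y : V → Ω → ℝ}

lemma IsDependencyGraph.integral_mul_comp_sum_compl_eq_zero (hY : IsDependencyGraph μ H Y)
    (hmeas : ∀ i, AEMeasurable (Y i) μ) {g : ℝ → ℝ} (hg : Measurable g) {i : V}
    (hmean : ∫ ω, Y i ω ∂μ = 0) :
    ∫ ω, Y i ω * g (∑ j ∈ (closedNbhd H i)ᶜ, Y j ω) ∂μ = 0 := by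
  have hind := (hY.indepFun_sum_compl i).comp measurable_id hg
  have hsum : AEMeasurable (fun ω => ∑ j ∈ (closedNbhd H i)ᶜ, Y j ω) μ :=
    Finset.aemeasurable_fun_sum _ fun j _ => hmeas j
  have hmul := hind.integral_fun_mul_eq_mul_integral (hmeas i).aestronglyMeasurable
    (hg.comp_aemeasurable hsum).aestronglyMeasurable
  simpa only [Function.comp_def, id, hmean, zero_mul] using hmul

variable [IsProbabilityMeasure μ] (hmeas : ∀ i, AEMeasurable (Y i) μ)
  (hb : ∀ i, ∀ᵐ ω ∂μ, |Y i ω| ≤ b)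
include hmeas hb

lemma IsDependencyGraph.integral_sum_mul_eq_variance (hY : IsDependencyGraph μ H Y)
    (hmean : ∀ i, ∫ ω, Y i ω ∂μ = 0) :
    ∫ ω, ∑ p ∈ closedPairs H, Y p.1 ω * Y p.2 ω ∂μ = variance (fun ω => ∑ i, Y i ω) μ := by
  have hmem := memLp_of_abs_le hmeas hb 2
  have hcov (i j : V) : ∫ ω, Y i ω * Y j ω ∂μ = cov[Y i, Y j; μ] := by
    rw [covariance_eq_sub (hmem i) (hmem j), hmean i, zero_mul, sub_zero]
    rfl
  calc ∫ ω, ∑ p ∈ closedPairs H, Y p.1 ω * Y p.2 ω ∂μ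
      = ∑ p ∈ closedPairs H, cov[Y p.1, Y p.2; μ] := by
        rw [integral_finsetSum _ fun p _ => (hmem p.1).integrable_mul (hmem p.2)]
        exact Finset.sum_congr rfl fun p _ => hcov p.1 p.2
    _ = ∑ i, ∑ j ∈ closedNbhd H i, cov[Y i, Y j; μ] := sum_closedPairs _
    _ = ∑ i, ∑ j, cov[Y i, Y j; μ] := Finset.sum_congr rfl fun i _ =>
        Finset.sum_subset (Finset.subset_univ _) fun j _ hj =>
          (hY.indepFun hj).covariance_eq_zero (hmem i) (hmem j)
    _ = variance (fun ω => ∑ i, Y i ω) μ := (variance_fun_sum' fun i _ => hmem i).symm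

lemma IsDependencyGraph.abs_integral_stein_le (hY : IsDependencyGraph μ H Y)
    (hmean : ∀ i, ∫ ω, Y i ω ∂μ = 0) (hD : ∀ i, (closedNbhd H i).card ≤ D)
    {f f' K : ℝ → ℝ} {A B : ℝ} (hf : Measurable f) (hf' : Measurable f') (hA : ∀ w, |f w| ≤ A)
    (hB : ∀ w, |f' w| ≤ B) (hK0 : ∀ w, 0 ≤ K w) (hKi : Integrable (fun ω => K (∑ i, Y i ω)) μ)
    (hK : ∀ w η, |η| ≤ D * b → |f w - f (w - η) - η * f' w| ≤ η ^ 2 * K w) :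
    |∫ ω, (f' (∑ i, Y i ω) - (∑ i, Y i ω) * f (∑ i, Y i ω)) ∂μ| ≤
      B * ∫ ω, |(∑ p ∈ closedPairs H, Y p.1 ω * Y p.2 ω) - 1| ∂μ
        + Fintype.card V * (b * (D * b) ^ 2) * ∫ ω, K (∑ i, Y i ω) ∂μ := by
  have hW := memLp_sum_of_abs_le hmeas hb 1 Finset.univ
  have hstein : Integrable (fun ω => f' (∑ i, Y i ω) - (∑ i, Y i ω) * f (∑ i, Y i ω)) μ :=
    (Integrable.of_bound (hf'.comp_aemeasurable hW.aemeasurable).aestronglyMeasurable B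
      (Eventually.of_forall fun _ => hB _)).sub
    ((memLp_one_iff_integrable.1 hW).mul_bdd
      (hf.comp_aemeasurable hW.aemeasurable).aestronglyMeasurable
      (Eventually.of_forall fun _ => hA _))
  have hlocal (i : V) : Integrable (fun ω => Y i ω * f (∑ j ∈ (closedNbhd H i)ᶜ, Y j ω)) μ :=
    (memLp_one_iff_integrable.1 (memLp_of_abs_le hmeas hb 1 i)).mul_bdd
      (hf.comp_aemeasurable
        (Finset.aemeasurable_fun_sum _ fun j _ => hmeas j)).aestronglyMeasurable
      (Eventually.of_forall fun _ => hA _)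
  have hT : Integrable (fun ω => |(∑ p ∈ closedPairs H, Y p.1 ω * Y p.2 ω) - 1|) μ :=
    ((memLp_one_iff_integrable.1 (memLp_sum_mul_of_abs_le hmeas hb 1 _)).sub
      (integrable_const 1)).abs
  have hzero : ∫ ω, (f' (∑ i, Y i ω) - (∑ i, Y i ω) * f (∑ i, Y i ω)) ∂μ =
      ∫ ω, (f' (∑ i, Y i ω) - (∑ i, Y i ω) * f (∑ i, Y i ω)
        + ∑ i, Y i ω * f (∑ j ∈ (closedNbhd H i)ᶜ, Y j ω)) ∂μ := by
    have hvanish : ∫ ω, ∑ i, Y i ω * f (∑ j ∈ (closedNbhd H i)ᶜ, Y j ω) ∂μ = 0 := by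
      rw [integral_finsetSum _ fun i _ => hlocal i]
      exact Finset.sum_eq_zero fun i _ =>
        hY.integral_mul_comp_sum_compl_eq_zero hmeas hf (hmean i)
    rw [integral_add hstein (integrable_finsetSum _ fun i _ => hlocal i), hvanish, add_zero]
  rw [hzero, ← Real.norm_eq_abs, ← integral_const_mul, ← integral_const_mul,
    ← integral_add (hT.const_mul B) (hKi.const_mul _)]
  refine norm_integral_le_of_norm_le ((hT.const_mul B).add (hKi.const_mul _)) ?_
  filter_upwards [ae_all_iff.2 hb] with ω hω
  exact abs_stein_decomposition_le hB hK hD hω (hK0 _)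

end LocalDependence

section UnitVariance

variable {Ω : Type*} [MeasurableSpace Ω] {μ : Measure Ω}

lemma integral_indicator_const_comp {W : Ω → ℝ} (hW : AEMeasurable W μ) {s : Set ℝ}
    (hs : MeasurableSet s) (k : ℝ) :
    ∫ ω, s.indicator (fun _ => k) (W ω) ∂μ = k * (μ.map W).real s := by
  rw [← integral_map hW (measurable_const.indicator hs).aestronglyMeasurable,
    integral_indicator_const k hs, smul_eq_mul, mul_comm]

variable [IsProbabilityMeasure μ]

lemma integrable_indicator_const_comp {W : Ω → ℝ} (hW : AEMeasurable W μ) {s : Set ℝ}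
    (hs : MeasurableSet s) (k : ℝ) : Integrable (fun ω => s.indicator (fun _ => k) (W ω)) μ :=
  have := Measure.isProbabilityMeasure_map hW
  ((integrable_const k).indicator hs).comp_aemeasurable hW

lemma integral_add_mul_abs_add_indicator_le {W : Ω → ℝ} (hW : MemLp W 2 μ)
    (hmean : ∫ ω, W ω ∂μ = 0) (hvar : variance W μ = 1) {A B k : ℝ} (hB : 0 ≤ B) {s : Set ℝ}
    (hs : MeasurableSet s) :
    ∫ ω, (A + B * |W ω| + s.indicator (fun _ => k) (W ω)) ∂μ ≤ A + B + k * (μ.map W).real s := by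
  have habs : Integrable (fun ω => |W ω|) μ := (hW.integrable one_le_two).abs
  have habs_le : ∫ ω, |W ω| ∂μ ≤ 1 := by
    simpa only [hmean, hvar, sub_zero, Real.sqrt_one] using
      integral_abs_sub_integral_le_sqrt_variance hW
  have hlin : Integrable (fun ω => A + B * |W ω|) μ := (integrable_const A).add (habs.const_mul B)
  rw [integral_add hlin (integrable_indicator_const_comp hW.aemeasurable hs k),
    integral_indicator_const_comp hW.aemeasurable hs, integral_add (integrable_const A)
      (habs.const_mul B), integral_const, probReal_univ, one_smul, integral_const_mul]
  gcongr
  exact mul_le_of_le_one_right hB habs_le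

variable {V : Type*} [Fintype V] [DecidableEq V] {H : SimpleGraph V} [DecidableRel H.Adj]
  {Y : V → Ω → ℝ} {D : ℕ} {b : ℝ}

lemma IsDependencyGraph.one_le_of_variance_eq_one (hY : IsDependencyGraph μ H Y)
    (hD : ∀ i, (closedNbhd H i).card ≤ D) (hmeas : ∀ i, AEMeasurable (Y i) μ)
    (hb : ∀ i, ∀ᵐ ω ∂μ, |Y i ω| ≤ b) (hvar : variance (fun ω => ∑ i, Y i ω) μ = 1) :
    1 ≤ Fintype.card V * D * b ^ 2 := by
  rw [← hvar]
  exact hY.variance_sum_le hD (memLp_of_abs_le hmeas hb 2) (sq_nonneg b) fun i =>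
    variance_le_sq_of_abs_sub_le (hmeas i) (c := 0) (by simpa only [sub_zero] using hb i)

variable (hY : IsDependencyGraph μ H Y) (hD : ∀ i, (closedNbhd H i).card ≤ D)
  (hmeas : ∀ i, AEMeasurable (Y i) μ) (hmean : ∀ i, ∫ ω, Y i ω ∂μ = 0) (hb0 : 0 ≤ b)
  (hb : ∀ i, ∀ᵐ ω ∂μ, |Y i ω| ≤ b) (hvar : variance (fun ω => ∑ i, Y i ω) μ = 1)
include hY hD hmeas hmean hb0 hb hvar

lemma IsDependencyGraph.integral_abs_sum_mul_sub_one_le :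
    ∫ ω, |(∑ p ∈ closedPairs H, Y p.1 ω * Y p.2 ω) - 1| ∂μ ≤
      2 * (Fintype.card V * D ^ 2 * b ^ 3) := by
  have hone := hY.one_le_of_variance_eq_one hD hmeas hb hvar
  have hmem := memLp_sum_mul_of_abs_le hmeas hb 2 (closedPairs H)
  have hT := integral_abs_sub_integral_le_sqrt_variance hmem
  rw [hY.integral_sum_mul_eq_variance hmeas hb hmean, hvar] at hT
  refine hT.trans (Real.sqrt_le_iff.2 ⟨by positivity, ?_⟩)
  calc variance (fun ω => ∑ p ∈ closedPairs H, Y p.1 ω * Y p.2 ω) μ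
      ≤ 4 * Fintype.card V * D ^ 3 * b ^ 4 := hY.variance_sum_mul_le hD hmeas hb
    _ ≤ 4 * Fintype.card V * D ^ 3 * b ^ 4 * (Fintype.card V * D * b ^ 2) :=
        le_mul_of_one_le_right (by positivity) hone
    _ = (2 * (Fintype.card V * D ^ 2 * b ^ 3)) ^ 2 := by ring

lemma IsDependencyGraph.abs_integral_ramp_sub_le {z ε : ℝ} (hε : 0 < ε) :
    |∫ x, ramp z ε x ∂μ.map (fun ω => ∑ i, Y i ω) - ∫ x, ramp z ε x ∂γ| ≤
      Fintype.card V * D ^ 2 * b ^ 3 * (9 + ε⁻¹ * (μ.map fun ω => ∑ i, Y i ω).real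
        (Set.Icc (z - D * b) (z + ε + D * b))) := by
  have hW := memLp_sum_of_abs_le hmeas hb 2 Finset.univ
  have hWmean : ∫ ω, ∑ i, Y i ω ∂μ = 0 := by
    rw [integral_finsetSum _ fun i _ => (memLp_of_abs_le hmeas hb 2 i).integrable one_le_two]
    exact Finset.sum_eq_zero fun i _ => hmean i
  set I := Set.Icc (z - D * b) (z + ε + D * b)
  have hIi := integrable_indicator_const_comp hW.aemeasurable (s := I) measurableSet_Icc ε⁻¹
  have hstein := hY.abs_integral_stein_le hmeas hb hmean hD
    (K := fun w => 3 + 2 * |w| + I.indicator (fun _ => ε⁻¹) w)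
    (continuous_steinSolution continuous_ramp integrable_ramp).measurable
    (continuous_steinSolutionDeriv continuous_ramp integrable_ramp).measurable
    (fun _ => abs_steinSolution_ramp_le) (fun _ => abs_steinSolutionDeriv_ramp_le)
    (fun w => add_nonneg (by positivity)
      (Set.indicator_nonneg (fun _ _ => (inv_pos.2 hε).le) w))
    (((integrable_const 3).add ((hW.integrable one_le_two).abs.const_mul 2)).add hIi)
    fun w η hη => abs_steinSolution_ramp_sub_sub_mul_le hε hη
  have hT := hY.integral_abs_sum_mul_sub_one_le hD hmeas hmean hb0 hb hvar
  have hK := integral_add_mul_abs_add_indicator_le (A := 3) (k := ε⁻¹) hW hWmean hvar zero_le_two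
    (s := I) measurableSet_Icc
  have := Measure.isProbabilityMeasure_map hW.aemeasurable
  rw [integral_map_sub_integral_gaussianReal hW.aemeasurable integrable_ramp]
  refine hstein.trans ((add_le_add (mul_le_mul_of_nonneg_left hT zero_le_two)
    (mul_le_mul_of_nonneg_left hK (by positivity))).trans_eq ?_)
  ring

lemma IsDependencyGraph.dKolNormal_sum_le :
    dKolNormal μ (fun ω => ∑ i, Y i ω) ≤ 24 * (Fintype.card V * D ^ 2 * b ^ 3) := by
  have hone := hY.one_le_of_variance_eq_one hD hmeas hb hvar
  have hW := (memLp_sum_of_abs_le hmeas hb 2 Finset.univ).aemeasurable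
  have := Measure.isProbabilityMeasure_map hW
  set κ := dKolNormal μ fun ω => ∑ i, Y i ω
  set θ := (Fintype.card V * D ^ 2 * b ^ 3 : ℝ) with hθ
  have hle : D * b ≤ θ :=
    calc D * b ≤ D * b * (Fintype.card V * D * b ^ 2) := le_mul_of_one_le_right (by positivity) hone
      _ = θ := by ring
  have hpos : 0 < θ := by
    have hne : (Fintype.card V * D * b ^ 2 : ℝ) ≠ 0 := (zero_lt_one.trans_le hone).ne'
    refine lt_of_le_of_ne (by positivity) (Ne.symm ?_)
    simpa [hθ] using hne
  have hconc (z : ℝ) : (μ.map fun ω => ∑ i, Y i ω).real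
      (Set.Icc (z - D * b) (z + 4 * θ + D * b)) ≤ 2 * κ + 3 * θ := by
    have hIcc := measureReal_Icc_le_of_abs_sub_gaussianReal_le (abs_sub_le_dKolNormal hW)
      (a := z - D * b) (b := z + 4 * θ + D * b) (by linarith [show 0 ≤ D * b by positivity])
    linarith
  have hramp (z : ℝ) : |∫ x, ramp z (4 * θ) x ∂μ.map (fun ω => ∑ i, Y i ω)
      - ∫ x, ramp z (4 * θ) x ∂γ| ≤ κ / 2 + 10 * θ := by
    refine (hY.abs_integral_ramp_sub_le hD hmeas hmean hb0 hb hvar (by positivity)).trans ?_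
    calc _ ≤ θ * (9 + (4 * θ)⁻¹ * (2 * κ + 3 * θ)) := by
          gcongr
          exact hconc z
      _ ≤ κ / 2 + 10 * θ := by
          field_simp
          linarith
  have hself : κ ≤ κ / 2 + 10 * θ + 4 * θ / 2 :=
    dKolNormal_le hW (abs_measureReal_Iic_sub_gaussianReal_le (by positivity) hramp)
  linarith

end UnitVariance

section Standardization

variable {Ω : Type*} [MeasurableSpace Ω] {μ : Measure Ω}

lemma standardize_sum {ι : Type*} [Fintype ι] {Y : ι → Ω → ℝ} (hY : ∀ i, Integrable (Y i) μ) :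
    standardize μ (fun ω => ∑ i, Y i ω) = fun ω =>
      ∑ i, (Y i ω - ∫ ω', Y i ω' ∂μ) / √(variance (fun ω' => ∑ j, Y j ω') μ) := by
  funext ω
  rw [standardize, integral_finsetSum _ fun i _ => hY i, ← Finset.sum_sub_distrib, Finset.sum_div]

variable [IsProbabilityMeasure μ]

lemma variance_standardize {W : Ω → ℝ} (hW : AEStronglyMeasurable W μ) (hvar : 0 < variance W μ) :
    variance (standardize μ W) μ = 1 := by
  have hdiv : standardize μ W = fun ω => (√(variance W μ))⁻¹ * (W ω - ∫ ω', W ω' ∂μ) :=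
    funext fun ω => div_eq_inv_mul _ _
  rw [hdiv, variance_const_mul, variance_sub_const hW, inv_pow, Real.sq_sqrt hvar.le,
    inv_mul_cancel₀ hvar.ne']

variable {X : Ω → ℝ} {c L : ℝ}

lemma memLp_of_abs_sub_le (hX : AEMeasurable X μ) (hL : ∀ᵐ ω ∂μ, |X ω - c| ≤ L) (q : ENNReal) :
    MemLp X q μ := by
  have hsub : MemLp (fun ω => X ω - c) q μ :=
    .of_bound (hX.sub_const c).aestronglyMeasurable L hL
  simpa only [Pi.add_def, sub_add_cancel] using hsub.add (memLp_const c)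

lemma abs_sub_integral_le_two_mul (hX : AEMeasurable X μ) (hL : ∀ᵐ ω ∂μ, |X ω - c| ≤ L) :
    ∀ᵐ ω ∂μ, |X ω - ∫ ω', X ω' ∂μ| ≤ 2 * L := by
  have hint : Integrable X μ := (memLp_of_abs_sub_le hX hL 1).integrable le_rfl
  have hmean : |(∫ ω, X ω ∂μ) - c| ≤ L := by
    simpa [integral_sub hint (integrable_const c)] using
      norm_integral_le_of_norm_le_const (f := fun ω => X ω - c) hL
  filter_upwards [hL] with ω hω
  linarith [abs_sub_le (X ω) c (∫ ω', X ω' ∂μ), abs_sub_comm c (∫ ω', X ω' ∂μ)]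

variable {V : Type*} [Fintype V] [DecidableEq V] {H : SimpleGraph V} [DecidableRel H.Adj]
  {Y : V → Ω → ℝ} {D : ℕ} {c : V → ℝ}

lemma IsDependencyGraph.variance_sum_le_of_abs_sub_le (hY : IsDependencyGraph μ H Y)
    (hD : ∀ i, (closedNbhd H i).card ≤ D) (hmeas : ∀ i, AEMeasurable (Y i) μ)
    (hL : ∀ i, ∀ᵐ ω ∂μ, |Y i ω - c i| ≤ L) :
    variance (fun ω => ∑ i, Y i ω) μ ≤ Fintype.card V * D * L ^ 2 :=
  hY.variance_sum_le hD (fun i => memLp_of_abs_sub_le (hmeas i) (hL i) 2) (sq_nonneg L)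
    fun i => variance_le_sq_of_abs_sub_le (hmeas i) (hL i)

lemma IsDependencyGraph.dKolNormal_standardize_sum_le (hY : IsDependencyGraph μ H Y)
    (hD : ∀ i, (closedNbhd H i).card ≤ D) (hmeas : ∀ i, AEMeasurable (Y i) μ) (hL0 : 0 ≤ L)
    (hL : ∀ i, ∀ᵐ ω ∂μ, |Y i ω - c i| ≤ L) (hvar : 0 < variance (fun ω => ∑ i, Y i ω) μ) :
    dKolNormal μ (standardize μ fun ω => ∑ i, Y i ω) ≤
      192 * (Fintype.card V * D ^ 2 * (L / √(variance (fun ω => ∑ i, Y i ω) μ)) ^ 3) := by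
  have hint (i : V) : Integrable (Y i) μ :=
    (memLp_of_abs_sub_le (hmeas i) (hL i) 1).integrable le_rfl
  have hone := variance_standardize (integrable_finsetSum _ fun i _ => hint i).1 hvar
  rw [standardize_sum hint] at hone ⊢
  set σ := √(variance (fun ω => ∑ i, Y i ω) μ)
  have hσ : 0 ≤ σ := Real.sqrt_nonneg _
  have hdep : IsDependencyGraph μ H fun i ω => (Y i ω - ∫ ω', Y i ω' ∂μ) / σ :=
    hY.comp (g := fun i x => (x - ∫ ω', Y i ω' ∂μ) / σ) fun i => by fun_prop
  have hcentred (i : V) : ∫ ω, (Y i ω - ∫ ω', Y i ω' ∂μ) / σ ∂μ = 0 := by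
    rw [integral_div, integral_sub (hint i) (integrable_const _), integral_const, probReal_univ,
      one_smul, sub_self, zero_div]
  have hbound (i : V) : ∀ᵐ ω ∂μ, |(Y i ω - ∫ ω', Y i ω' ∂μ) / σ| ≤ 2 * L / σ := by
    filter_upwards [abs_sub_integral_le_two_mul (hmeas i) (hL i)] with ω hω
    rw [abs_div, abs_of_nonneg hσ]
    gcongr
  calc dKolNormal μ (fun ω => ∑ i, (Y i ω - ∫ ω', Y i ω' ∂μ) / σ)
      ≤ 24 * (Fintype.card V * D ^ 2 * (2 * L / σ) ^ 3) :=
        hdep.dKolNormal_sum_le hD (fun i => ((hmeas i).sub_const _).div_const σ) hcentred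
          (by positivity) hbound hone
    _ = 192 * (Fintype.card V * D ^ 2 * (L / σ) ^ 3) := by ring

end Standardization

section Tuples

variable {V κ : Type*}

/-- The graph on the tuples `α : κ → V` satisfying `p` in which two distinct tuples are adjacent
when some entries of theirs are equal or adjacent in `G`. It is a dependency graph of the tuples
`X_α` when `G` is a dependency graph of the variables `X`. -/
def tupleGraph (G : SimpleGraph V) (p : (κ → V) → Prop) : SimpleGraph {α // p α} where
  Adj α β := α ≠ β ∧ ∃ i j, α.1 i = β.1 j ∨ G.Adj (α.1 i) (β.1 j)
  symm := ⟨fun _ _ ⟨hne, i, j, h⟩ => ⟨hne.symm, j, i, h.imp Eq.symm SimpleGraph.Adj.symm⟩⟩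
  loopless := ⟨fun _ h => h.1 rfl⟩

lemma IsDependencyGraph.tuple {Ω E : Type*} [MeasurableSpace Ω] [MeasurableSpace E]
    {μ : Measure Ω} {G : SimpleGraph V} {X : V → Ω → E} (hX : IsDependencyGraph μ G X)
    (p : (κ → V) → Prop) :
    IsDependencyGraph μ (tupleGraph G p) fun α ω (i : κ) => X (α.1 i) ω := by
  intro A B hAB hadj
  let entries (T : Set {α // p α}) : Set V := {v | ∃ α ∈ T, ∃ i, α.1 i = v}
  have hfar {α β : {α // p α}} (hα : α ∈ A) (hβ : β ∈ B) (i j : κ) :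
      ¬(α.1 i = β.1 j ∨ G.Adj (α.1 i) (β.1 j)) := fun h =>
    hadj α hα β hβ ⟨hAB.ne_of_mem hα hβ, i, j, h⟩
  have hind : IndepFun (fun ω (v : entries A) => X v ω) (fun ω (v : entries B) => X v ω) μ := by
    refine hX (entries A) (entries B) (Set.disjoint_left.2 ?_) ?_
    · rintro _ ⟨α, hα, i, rfl⟩ ⟨β, hβ, j, h⟩
      exact hfar hα hβ i j (.inl h.symm)
    · rintro _ ⟨α, hα, i, rfl⟩ _ ⟨β, hβ, j, rfl⟩ h
      exact hfar hα hβ i j (.inr h)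
  have hmeas (T : Set {α // p α}) : Measurable fun (x : entries T → E) (α : T) (i : κ) =>
      x ⟨α.1.1 i, α.1, α.2, i, rfl⟩ := by fun_prop
  exact hind.comp (hmeas A) (hmeas B)

variable [Fintype V] [DecidableEq V] [Fintype κ]

lemma card_filter_apply_mem [DecidableEq κ] (j : κ) (s : Finset V) :
    ({β : κ → V | β j ∈ s} : Finset (κ → V)).card =
      s.card * Fintype.card V ^ (Fintype.card κ - 1) := by
  have hpi : ({β : κ → V | β j ∈ s} : Finset (κ → V)) =
      Fintype.piFinset (Function.update (fun _ => Finset.univ) j s) := by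
    ext β
    rw [Finset.mem_filter_univ, Fintype.mem_piFinset,
      Function.forall_update_iff _ fun i t => β i ∈ t]
    simp only [Finset.mem_univ, implies_true, and_true]
  rw [hpi, Fintype.card_piFinset, Fintype.prod_eq_mul_prod_compl j, Function.update_self,
    Finset.prod_eq_pow_card (b := Fintype.card V), Finset.card_compl, Finset.card_singleton]
  intro i hi
  rw [Function.update_of_ne (by simpa using hi), Finset.card_univ]

variable {G : SimpleGraph V} [DecidableRel G.Adj] {p : (κ → V) → Prop} [Fintype {α // p α}]
  [DecidableRel (tupleGraph G p).Adj]

lemma exists_mem_closedNbhd_of_mem_closedNbhd_tupleGraph [Nonempty κ] {α β : {α // p α}}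
    (hβ : β ∈ closedNbhd (tupleGraph G p) α) : ∃ i j, β.1 j ∈ closedNbhd G (α.1 i) := by
  rcases mem_closedNbhd.1 hβ with rfl | ⟨-, i, j, h⟩
  · have i := Classical.arbitrary κ
    exact ⟨i, i, mem_closedNbhd.2 (.inl rfl)⟩
  · exact ⟨i, j, mem_closedNbhd.2 (h.imp_left Eq.symm)⟩

lemma card_closedNbhd_tupleGraph_le [Nonempty κ] {m : ℕ} (hdeg : ∀ v, G.degree v ≤ m)
    (α : {α // p α}) :
    (closedNbhd (tupleGraph G p) α).card ≤
      Fintype.card κ ^ 2 * (m + 1) * Fintype.card V ^ (Fintype.card κ - 1) := by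
  classical
  let near (e : κ × κ) : Finset (κ → V) := {β | β e.2 ∈ closedNbhd G (α.1 e.1)}
  have hcover : (closedNbhd (tupleGraph G p) α).map (.subtype p) ⊆ Finset.univ.biUnion near := by
    intro β hβ
    obtain ⟨β, hβα, rfl⟩ := Finset.mem_map.1 hβ
    obtain ⟨i, j, h⟩ := exists_mem_closedNbhd_of_mem_closedNbhd_tupleGraph hβα
    exact Finset.mem_biUnion.2 ⟨(i, j), Finset.mem_univ _, (Finset.mem_filter_univ _).2 h⟩
  have hnear (e : κ × κ) :
      (near e).card ≤ (m + 1) * Fintype.card V ^ (Fintype.card κ - 1) := by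
    rw [card_filter_apply_mem]
    gcongr
    exact (Finset.card_insert_le _ _).trans (Nat.succ_le_succ (hdeg _))
  calc (closedNbhd (tupleGraph G p) α).card
      = ((closedNbhd (tupleGraph G p) α).map (.subtype p)).card := (Finset.card_map _).symm
    _ ≤ (Finset.univ.biUnion near).card := Finset.card_le_card hcover
    _ ≤ Fintype.card (κ × κ) * ((m + 1) * Fintype.card V ^ (Fintype.card κ - 1)) :=
        Finset.card_biUnion_le_card_mul _ _ _ fun e _ => hnear e
    _ = Fintype.card κ ^ 2 * (m + 1) * Fintype.card V ^ (Fintype.card κ - 1) := by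
        rw [Fintype.card_prod, sq, mul_assoc (_ * _)]

end Tuples

section Ratio

/-- The paper's `Ξ_∞` for a sum of variance `v` over tuples of length `ℓ` from `n` variables with
a dependency graph of maximal degree `m`, and a kernel within distance `L` of a constant. -/
def xiInfty (n ℓ m : ℕ) (L v : ℝ) : ℝ :=
  1 / L * √(v / ((ℓ : ℝ) ^ 2 * (m + 1) * (n : ℝ) ^ (2 * ℓ - 1)))

variable {n ℓ m : ℕ} {L v : ℝ}

lemma pow_two_mul_sub_one {M : Type*} [Monoid M] (x : M) (hℓ : 0 < ℓ) :
    x ^ (2 * ℓ - 1) = x ^ ℓ * x ^ (ℓ - 1) := by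
  rw [← pow_add]
  congr 1
  omega

lemma mul_sq_mul_div_sqrt_pow_three_eq {q a r : ℝ} (hq : 0 < q) (ha : 0 < a) (hr : 0 < r)
    (hL : 0 < L) (hv : 0 < v) :
    a * r * (q * a) ^ 2 * (L / √v) ^ 3 = √(q / r) * (1 / L * √(v / (q * (a ^ 2 * r))))⁻¹ ^ 3 := by
  obtain ⟨s, hs, rfl⟩ : ∃ s : ℝ, 0 < s ∧ q = s ^ 2 :=
    ⟨√q, Real.sqrt_pos.2 hq, (Real.sq_sqrt hq.le).symm⟩
  obtain ⟨t, ht, rfl⟩ : ∃ t : ℝ, 0 < t ∧ r = t ^ 2 :=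
    ⟨√r, Real.sqrt_pos.2 hr, (Real.sq_sqrt hr.le).symm⟩
  rw [← mul_pow, ← mul_pow, ← div_pow, Real.sqrt_sq (by positivity), Real.sqrt_div hv.le,
    Real.sqrt_sq (by positivity)]
  field_simp

variable (hn : 0 < n) (hℓ : 0 < ℓ) (hL : 0 < L)
include hn hℓ hL

lemma xiInfty_pos (hv : 0 < v) : 0 < xiInfty n ℓ m L v := by
  unfold xiInfty
  positivity

lemma xiInfty_le_one
    (hv : v ≤ (n : ℝ) ^ ℓ * ((ℓ : ℝ) ^ 2 * (m + 1) * (n : ℝ) ^ (ℓ - 1)) * L ^ 2) :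
    xiInfty n ℓ m L v ≤ 1 := by
  rw [xiInfty, one_div, inv_mul_le_iff₀ hL, mul_one]
  refine Real.sqrt_le_iff.2 ⟨hL.le, (div_le_iff₀ (by positivity)).2 (hv.trans_eq ?_)⟩
  rw [pow_two_mul_sub_one _ hℓ]
  ring

lemma berry_esseen_rate_eq (hv : 0 < v) :
    (n : ℝ) ^ ℓ * ((ℓ : ℝ) ^ 2 * (m + 1) * (n : ℝ) ^ (ℓ - 1)) ^ 2 * (L / √v) ^ 3 =
      √((ℓ : ℝ) ^ 2 * (m + 1) / n) * (xiInfty n ℓ m L v)⁻¹ ^ 3 := by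
  have hpow : (n : ℝ) ^ ℓ = (n : ℝ) ^ (ℓ - 1) * n := (pow_sub_one_mul hℓ.ne' _).symm
  have hpow_sq : (n : ℝ) ^ (2 * ℓ - 1) = ((n : ℝ) ^ (ℓ - 1)) ^ 2 * n := by
    rw [pow_two_mul_sub_one _ hℓ, hpow]
    ring
  rw [xiInfty, hpow_sq, hpow]
  exact mul_sq_mul_div_sqrt_pow_three_eq (by positivity) (by positivity) (by positivity) hL hv

end Ratio

section UStatistic

lemma card_subtype_tuples_le {V κ : Type*} [Fintype V] [Fintype κ] (p : (κ → V) → Prop)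
    [Fintype {α // p α}] :
    Fintype.card {α // p α} ≤ Fintype.card V ^ Fintype.card κ := by
  classical
  exact (Fintype.card_subtype_le p).trans_eq Fintype.card_fun

variable {Ω 𝒮 V κ : Type*} [MeasurableSpace Ω] [MeasurableSpace 𝒮] {μ : Measure Ω}
  [IsProbabilityMeasure μ] [Fintype V] [Fintype κ] [Nonempty κ] {p : (κ → V) → Prop}
  [Fintype {α // p α}] {X : V → Ω → 𝒮} {G : SimpleGraph V} [DecidableRel G.Adj] {m : ℕ}
  {f : {α // p α} → (κ → 𝒮) → ℝ} {c : {α // p α} → ℝ} {L : ℝ}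

variable (hX : ∀ v, AEMeasurable (X v) μ) (hG : IsDependencyGraph μ G X)
  (hdeg : ∀ v, G.degree v ≤ m) (hf : ∀ α, Measurable (f α))
  (hbdd : ∀ α, ∀ᵐ ω ∂μ, |f α (fun i => X (α.1 i) ω) - c α| ≤ L)
include hX hG hdeg hf hbdd

lemma variance_sum_tuples_le :
    variance (fun ω => ∑ α, f α (fun i => X (α.1 i) ω)) μ ≤
      (Fintype.card V : ℝ) ^ Fintype.card κ *
        ((Fintype.card κ : ℝ) ^ 2 * (m + 1) * (Fintype.card V : ℝ) ^ (Fintype.card κ - 1)) *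
        L ^ 2 := by
  classical
  refine (((hG.tuple p).comp hf).variance_sum_le_of_abs_sub_le
    (card_closedNbhd_tupleGraph_le hdeg)
    (fun α => (hf α).comp_aemeasurable (aemeasurable_pi_lambda _ fun i => hX (α.1 i)))
    hbdd).trans ?_
  push_cast
  gcongr
  exact_mod_cast card_subtype_tuples_le p

lemma dKolNormal_standardize_sum_tuples_le (hL : 0 ≤ L)
    (hvar : 0 < variance (fun ω => ∑ α, f α (fun i => X (α.1 i) ω)) μ) :
    dKolNormal μ (standardize μ fun ω => ∑ α, f α (fun i => X (α.1 i) ω)) ≤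
      192 * ((Fintype.card V : ℝ) ^ Fintype.card κ *
        ((Fintype.card κ : ℝ) ^ 2 * (m + 1) * (Fintype.card V : ℝ) ^ (Fintype.card κ - 1)) ^ 2 *
        (L / √(variance (fun ω => ∑ α, f α (fun i => X (α.1 i) ω)) μ)) ^ 3) := by
  classical
  refine (((hG.tuple p).comp hf).dKolNormal_standardize_sum_le
    (card_closedNbhd_tupleGraph_le hdeg)
    (fun α => (hf α).comp_aemeasurable (aemeasurable_pi_lambda _ fun i => hX (α.1 i)))
    hL hbdd hvar).trans ?_
  push_cast
  gcongr
  exact_mod_cast card_subtype_tuples_le p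

end UStatistic

theorem ustatistic_berry_esseen_bounded_general {Ω 𝒮 V κ : Type*} [MeasurableSpace Ω]
    [MeasurableSpace 𝒮] {μ : Measure Ω} [IsProbabilityMeasure μ] [Fintype V] [Fintype κ]
    [Nonempty κ] {n ℓ m : ℕ} (hn : Fintype.card V = n) (hℓ : Fintype.card κ = ℓ)
    {X : V → Ω → 𝒮} (hX : ∀ v, AEMeasurable (X v) μ)
    {G : SimpleGraph V} [DecidableRel G.Adj] (hG : IsDependencyGraph μ G X)
    (hdeg : ∀ v, G.degree v ≤ m) {p : (κ → V) → Prop} [Fintype {α // p α}]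
    {f : {α // p α} → (κ → 𝒮) → ℝ} (hf : ∀ α, Measurable (f α)) {c : {α // p α} → ℝ} {L : ℝ}
    (hL : 0 < L) (hbdd : ∀ α, ∀ᵐ ω ∂μ, |f α (fun i => X (α.1 i) ω) - c α| ≤ L)
    {k : ℝ} (hk : 0 < k) {Vn : Ω → ℝ} (hVn : Vn = fun ω => ∑ α, f α (fun i => X (α.1 i) ω))
    (hvar : 0 < variance (fun ω => k * Vn ω) μ) :
    (0 < xiInfty n ℓ m L (variance Vn μ) ∧ xiInfty n ℓ m L (variance Vn μ) ≤ 1) ∧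
    dKolNormal μ (standardize μ fun ω => k * Vn ω) ≤
      192 * √((ℓ : ℝ) ^ 2 * (m + 1) / n) * (xiInfty n ℓ m L (variance Vn μ))⁻¹ ^ 3 := by
  subst hn hℓ
  have hVar : 0 < variance Vn μ := by
    rw [variance_const_mul] at hvar
    exact pos_of_mul_pos_right hvar (sq_nonneg k)
  have hle := variance_sum_tuples_le hX hG hdeg hf hbdd
  rw [← hVn] at hle
  have hκ : 0 < Fintype.card κ := Fintype.card_pos
  have hV : 0 < Fintype.card V := by
    refine Nat.pos_of_ne_zero fun h => (hVar.trans_le hle).ne' ?_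
    rw [h, Nat.cast_zero, zero_pow hκ.ne', zero_mul, zero_mul]
  refine ⟨⟨xiInfty_pos hV hκ hL hVar, xiInfty_le_one hV hκ hL hle⟩, ?_⟩
  rw [standardize_const_mul hk, mul_assoc, ← berry_esseen_rate_eq hV hκ hL hVar]
  subst hVn
  exact dKolNormal_standardize_sum_tuples_le hX hG hdeg hf hbdd hL.le hVar

/-- Corollary 5.4 of the paper: Berry–Esseen bound for U-statistics of uniformly bounded
kernels over random variables with a dependency graph. -/
theorem ustatistic_berry_esseen_bounded
    {Ω 𝒮 : Type*} [MeasurableSpace Ω] [MeasurableSpace 𝒮]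
    (μ : Measure Ω) [IsProbabilityMeasure μ]
    (n ℓ m : ℕ) (hℓ : 1 ≤ ℓ) (hℓn : ℓ ≤ n)
    (X : Fin n → Ω → 𝒮) (hXmeas : ∀ k, Measurable (X k))
    (G : SimpleGraph (Fin n)) [DecidableRel G.Adj]
    (hG : IsDependencyGraph μ G X)
    (hdeg : ∀ k, G.degree k ≤ m)
    (f : (Fin ℓ → 𝒮) → ℝ) (hf : Measurable f)
    (c : {α : Fin ℓ → Fin n // Function.Injective α} → ℝ)
    (L : ℝ) (hL : 0 < L)
    (hbdd : ∀ α : {α : Fin ℓ → Fin n // Function.Injective α},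
      ∀ᵐ ω ∂μ, |f (fun i => X (α.1 i) ω) - c α| ≤ L)
    (U Vn : Ω → ℝ)
    (hU : U = fun ω => (1 / (Nat.factorial ℓ * Nat.choose n ℓ : ℝ)) *
      ∑ α : {α : Fin ℓ → Fin n // Function.Injective α}, f (fun i => X (α.1 i) ω))
    (hVn : Vn = fun ω =>
      ∑ α : {α : Fin ℓ → Fin n // Function.Injective α}, f (fun i => X (α.1 i) ω))
    (hVarU : 0 < variance U μ)
    (Ξ : ℝ) (hΞ : Ξ = (1 / L) *
      Real.sqrt (variance Vn μ / ((ℓ : ℝ) ^ 2 * (m + 1) * (n : ℝ) ^ (2 * ℓ - 1)))) :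
    (0 < Ξ ∧ Ξ ≤ 1) ∧
    dKolNormal μ (fun ω => (U ω - ∫ ω', U ω' ∂μ) / Real.sqrt (variance U μ)) ≤
      227.5 * Real.sqrt ((ℓ : ℝ) ^ 2 * (m + 1) / n) * Ξ⁻¹ ^ 3 := by
  have : Nonempty (Fin ℓ) := ⟨⟨0, hℓ⟩⟩
  have hk : 0 < 1 / (Nat.factorial ℓ * Nat.choose n ℓ : ℝ) := by
    have := Nat.choose_pos hℓn
    positivity
  subst hU
  obtain rfl : Ξ = xiInfty n ℓ m L (variance Vn μ) := hΞ
  subst hVn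
  obtain ⟨⟨hpos, hle⟩, hbound⟩ := ustatistic_berry_esseen_bounded_general (Fintype.card_fin n)
    (Fintype.card_fin ℓ) (fun k => (hXmeas k).aemeasurable) hG hdeg (fun _ => hf) hL hbdd hk rfl
    hVarU
  exact ⟨⟨hpos, hle⟩, hbound.trans (by gcongr; norm_num)⟩
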